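/- Let P be a finite bounded poset such that A** = A for all antichains A in P. Then P admits a fixed-point-free, order-reversing bijection of order 2 onto itself; in particular, P is isomorphic to its order dual. -/

import Mathlib

/-- The blocker of a set `A` in a poset with bottom element: the minimal elements among
those having a common atom with every member of `A`. -/
def blocker {P : Type*} [PartialOrder P] [OrderBot P] (A : Set P) : Set P :=
  {x | (∀ a ∈ A, ∃ l : P, IsAtom l ∧ l ≤ x ∧ l ≤ a) ∧
    ∀ y : P, (∀ a ∈ A, ∃ l : P, IsAtom l ∧ l ≤ y ∧ l ≤ a) → y ≤ x → y = x}

/-- An antichain in a poset with bottom element, in the sense of Björner–Hultman: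
a nonempty set avoiding `⊥` whose elements are pairwise incomparable. -/
def IsAnti {P : Type*} [PartialOrder P] [OrderBot P] (A : Set P) : Prop :=
  A.Nonempty ∧ ⊥ ∉ A ∧ IsAntichain (· ≤ ·) A

/-- `Λ(x)`, the set of atoms below `x`. -/
def atomsBelow {P : Type*} [PartialOrder P] [OrderBot P] (x : P) : Set P :=
  {l | IsAtom l ∧ l ≤ x}

/-!
The poset embeds into the Boolean algebra of sets of atoms via `x ↦ Λ(x)`, and the image is closed
under complementation; the involution sends `x` to the element whose atoms are exactly those not
below `x`.

Both facts come from one principle. Blocker duality makes an antichain determined by its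
transversals, so adjoining to `A` an element that meets every transversal of `A` cannot produce a
larger antichain. If `Λ(x) ⊆ Λ(y)`, every transversal of `{x}` meets `y`, so `x` and `y` are
comparable; and `y ≤ x` forces `Λ(x) = Λ(y)`, hence the same transversals and `x = y`. If no
element has `B`, the set of atoms not below `x`, as its exact set of atoms, then every transversal
of `B` has an atom below `x`, although `B ∪ {x}` is a larger antichain.
-/

section Transversals

variable {P : Type*} [PartialOrder P] [OrderBot P] {A B : Set P} {x y a : P}

theorem atomsBelow_mono (hxy : x ≤ y) : atomsBelow x ⊆ atomsBelow y :=
  fun _ hl => ⟨hl.1, hl.2.trans hxy⟩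

theorem atomsBelow_bot : atomsBelow (⊥ : P) = ∅ :=
  Set.eq_empty_of_forall_notMem fun _ hl => hl.1.ne_bot (le_bot_iff.1 hl.2)

theorem atomsBelow_of_isAtom (ha : IsAtom a) : atomsBelow a = {a} :=
  Set.Subset.antisymm (fun _ hl => (ha.le_iff_eq hl.1.ne_bot).1 hl.2)
    (Set.singleton_subset_iff.2 ⟨ha, le_rfl⟩)

/-- The elements sharing an atom with every member of `A`; the blocker of `A` consists of the
minimal ones. -/
def transversals (A : Set P) : Set P :=
  {x | ∀ a ∈ A, (atomsBelow x ∩ atomsBelow a).Nonempty}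

theorem blocker_eq_setOf_minimal (A : Set P) :
    blocker A = {x | Minimal (· ∈ transversals A) x} := by
  have mem_transversals : ∀ z, z ∈ transversals A ↔ ∀ a ∈ A, ∃ l, IsAtom l ∧ l ≤ z ∧ l ≤ a :=
    fun z => forall₂_congr fun a _ => exists_congr fun l =>
      ⟨fun ⟨hz, ha⟩ => ⟨hz.1, hz.2, ha.2⟩, fun ⟨hl, hz, ha⟩ => ⟨⟨hl, hz⟩, hl, ha⟩⟩
  ext x
  rw [Set.mem_ofPred_eq, minimal_mem_iff]
  simp only [blocker, Set.mem_ofPred_eq, mem_transversals, eq_comm (a := x)]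

theorem blocker_congr (hAB : transversals A = transversals B) : blocker A = blocker B := by
  rw [blocker_eq_setOf_minimal, blocker_eq_setOf_minimal, hAB]

theorem blocker_empty : blocker (∅ : Set P) = {⊥} := by
  ext x
  simp [blocker_eq_setOf_minimal, transversals]

theorem blocker_eq_empty (hA : transversals A = ∅) : blocker A = ∅ := by
  simp [blocker_eq_setOf_minimal, hA, Minimal]

theorem mem_transversals_singleton :
    x ∈ transversals {a} ↔ (atomsBelow x ∩ atomsBelow a).Nonempty := by
  simp only [transversals, Set.mem_ofPred_eq, Set.mem_singleton_iff, forall_eq]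

theorem mem_transversals_insert :
    x ∈ transversals (insert a A) ↔
      (atomsBelow x ∩ atomsBelow a).Nonempty ∧ x ∈ transversals A :=
  Set.forall_mem_insert

theorem subset_atomsBelow_of_mem_transversals (hA : A ⊆ {l | IsAtom l})
    (hx : x ∈ transversals A) : A ⊆ atomsBelow x := by
  intro l hl
  have hmeet := hx l hl
  rwa [atomsBelow_of_isAtom (hA hl), Set.inter_singleton_nonempty] at hmeet

theorem isAnti_singleton (ha : a ≠ ⊥) : IsAnti {a} :=
  ⟨Set.singleton_nonempty a, ha.symm, Set.pairwise_singleton a _⟩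

theorem isAnti_of_subset_atoms (hne : A.Nonempty) (hA : A ⊆ {l | IsAtom l}) : IsAnti A :=
  ⟨hne, fun h => (hA h).ne_bot rfl,
    fun _ hl _ hm hlm hle => hlm (((hA hm).le_iff_eq (hA hl).ne_bot).1 hle)⟩

theorem IsAnti.insert (hA : IsAnti A) (hx : x ≠ ⊥) (hle : ∀ a ∈ A, ¬ a ≤ x)
    (hge : ∀ a ∈ A, ¬ x ≤ a) : IsAnti (insert x A) :=
  ⟨Set.insert_nonempty x A, fun h => h.elim hx.symm hA.2.1,
    hA.2.2.insert (fun a ha _ => hle a ha) (fun a ha _ => hge a ha)⟩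

end Transversals

/-- Strong blocker duality: `A** = A` for every antichain `A` of the poset. -/
def StrongBlockerDuality (P : Type*) [PartialOrder P] [OrderBot P] : Prop :=
  ∀ A : Set P, IsAnti A → blocker (blocker A) = A

namespace StrongBlockerDuality

variable {P : Type*} [PartialOrder P] [OrderBot P] {A B : Set P} {x y a : P}

theorem eq_of_transversals_eq (h : StrongBlockerDuality P) (hA : IsAnti A) (hB : IsAnti B)
    (hAB : transversals A = transversals B) : A = B := by
  rw [← h A hA, ← h B hB, blocker_congr hAB]

theorem mem_of_forall_transversals (h : StrongBlockerDuality P) (hA : IsAnti A)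
    (haA : IsAnti (insert a A))
    (ha : ∀ y ∈ transversals A, (atomsBelow y ∩ atomsBelow a).Nonempty) : a ∈ A := by
  have hEq : insert a A = A := h.eq_of_transversals_eq haA hA <| Set.ext fun y =>
    mem_transversals_insert.trans (and_iff_right_of_imp (ha y))
  exact hEq ▸ Set.mem_insert a A

theorem transversals_nonempty (h : StrongBlockerDuality P) (hA : IsAnti A) :
    (transversals A).Nonempty := by
  by_contra hempty
  have hbot : {⊥} = A := by
    rw [← h A hA, blocker_eq_empty (Set.not_nonempty_iff_eq_empty.1 hempty), blocker_empty]
  exact hA.2.1 (hbot ▸ Set.mem_singleton ⊥)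

theorem atomsBelow_nonempty (h : StrongBlockerDuality P) (hx : x ≠ ⊥) :
    (atomsBelow x).Nonempty := by
  obtain ⟨y, hy⟩ := h.transversals_nonempty (isAnti_singleton hx)
  exact (mem_transversals_singleton.1 hy).right

theorem atomsBelow_eq_empty_iff (h : StrongBlockerDuality P) : atomsBelow x = ∅ ↔ x = ⊥ :=
  ⟨fun hx => by_contra fun hne => (h.atomsBelow_nonempty hne).ne_empty hx,
    fun hx => hx ▸ atomsBelow_bot⟩

theorem atomsBelow_injective (h : StrongBlockerDuality P) :
    Function.Injective (atomsBelow : P → Set P) := by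
  intro x y hxy
  have hbot : x = ⊥ ↔ y = ⊥ := by
    rw [← h.atomsBelow_eq_empty_iff, hxy, h.atomsBelow_eq_empty_iff]
  by_cases hx : x = ⊥
  · rw [hx, hbot.1 hx]
  · have hy : y ≠ ⊥ := mt hbot.2 hx
    refine Set.singleton_injective <|
      h.eq_of_transversals_eq (isAnti_singleton hx) (isAnti_singleton hy) ?_
    ext z
    rw [mem_transversals_singleton, mem_transversals_singleton, hxy]

theorem atomsBelow_subset_iff (h : StrongBlockerDuality P) :
    atomsBelow x ⊆ atomsBelow y ↔ x ≤ y := by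
  refine ⟨fun hsub => ?_, atomsBelow_mono⟩
  by_contra hxy
  have hx : x ≠ ⊥ := fun hx => hxy (hx ▸ bot_le)
  have hy : y ≠ ⊥ := by
    rintro rfl
    exact ((h.atomsBelow_nonempty hx).mono hsub).ne_empty atomsBelow_bot
  have hyx : ¬ y ≤ x := fun hyx =>
    hxy (h.atomsBelow_injective (hsub.antisymm (atomsBelow_mono hyx))).le
  have hanti : IsAnti {y, x} :=
    (isAnti_singleton hx).insert hy (by simpa using hxy) (by simpa using hyx)
  have hmem : y ∈ ({x} : Set P) :=
    h.mem_of_forall_transversals (isAnti_singleton hx) hanti fun z hz =>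
      (mem_transversals_singleton.1 hz).mono (Set.inter_subset_inter_right _ hsub)
  exact hyx (Set.mem_singleton_iff.1 hmem).le

theorem exists_atomsBelow_eq_diff (h : StrongBlockerDuality P) (x : P) :
    ∃ m, atomsBelow m = {l | IsAtom l} \ atomsBelow x := by
  set B : Set P := {l | IsAtom l} \ atomsBelow x
  by_contra! hno
  have hBatoms : B ⊆ {l | IsAtom l} := Set.sdiff_subset
  have hBne : B.Nonempty :=
    Set.nonempty_iff_ne_empty.2 fun hempty => hno ⊥ (atomsBelow_bot.trans hempty.symm)
  have hBanti : IsAnti B := isAnti_of_subset_atoms hBne hBatoms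
  have hmeet : ∀ y ∈ transversals B, (atomsBelow y ∩ atomsBelow x).Nonempty := by
    intro y hy
    by_contra hdisj
    refine hno y (Set.Subset.antisymm (fun l hl => ?_)
      (subset_atomsBelow_of_mem_transversals hBatoms hy))
    exact ⟨hl.1, fun hlx => hdisj ⟨l, hl, hlx⟩⟩
  have hx : x ≠ ⊥ := by
    obtain ⟨y, hy⟩ := h.transversals_nonempty hBanti
    rintro rfl
    exact (hmeet y hy).right.ne_empty atomsBelow_bot
  have hle : ∀ l ∈ B, ¬ l ≤ x := fun l hl hlx => hl.2 ⟨hl.1, hlx⟩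
  have hge : ∀ l ∈ B, ¬ x ≤ l := fun l hl hxl => hle l hl ((hl.1.le_iff_eq hx).1 hxl).ge
  exact hle x (h.mem_of_forall_transversals hBanti (hBanti.insert hx hle hge) hmeet) le_rfl

end StrongBlockerDuality

theorem strong_blocker_duality_self_dual_general {P : Type*}
    [PartialOrder P] [OrderBot P] [Nontrivial P] (h : StrongBlockerDuality P) :
    (∃ φ : P → P, Function.Bijective φ ∧ (∀ x y : P, x ≤ y → φ y ≤ φ x) ∧
        (∀ x : P, φ x ≠ x) ∧ (∀ x : P, φ (φ x) = x)) ∧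
      Nonempty (P ≃o Pᵒᵈ) := by
  choose φ hφ using h.exists_atomsBelow_eq_diff
  have hanti : Antitone φ := fun x y hxy => by
    rw [← h.atomsBelow_subset_iff, hφ, hφ]
    exact Set.sdiff_subset_sdiff_right (atomsBelow_mono hxy)
  have hinv : Function.Involutive φ := fun x => h.atomsBelow_injective <| by
    rw [hφ, hφ, Set.sdiff_sdiff_cancel_left fun l hl => hl.1]
  have hfix : ∀ x, φ x ≠ x := by
    intro x hx
    obtain ⟨z, hz⟩ := exists_ne (⊥ : P)
    obtain ⟨l, hl, -⟩ := h.atomsBelow_nonempty hz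
    have hself : atomsBelow x = {l | IsAtom l} \ atomsBelow x := by rw [← hφ, hx]
    have hlx : l ∉ atomsBelow x := fun hmem => (hself.subset hmem).2 hmem
    exact hlx (hself.superset ⟨hl, hlx⟩)
  exact ⟨⟨φ, hinv.bijective, fun _ _ hxy => hanti hxy, hfix, hinv⟩,
    ⟨((hinv.toPerm φ).trans OrderDual.toDual).toOrderIso hanti.dual_right hanti.dual_left⟩⟩

/-- Corollary 2.5: if a (nontrivial) finite bounded poset satisfies `A** = A` for all
antichains `A`, then it admits a fixed-point-free order-reversing bijection of order 2
onto itself; in particular it is isomorphic to its order dual. -/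
theorem strong_blocker_duality_self_dual {P : Type*}
    [PartialOrder P] [BoundedOrder P] [Fintype P] [Nontrivial P]
    (h : ∀ A : Set P, IsAnti A → blocker (blocker A) = A) :
    (∃ φ : P → P, Function.Bijective φ ∧ (∀ x y : P, x ≤ y → φ y ≤ φ x) ∧
        (∀ x : P, φ x ≠ x) ∧ (∀ x : P, φ (φ x) = x)) ∧
      Nonempty (P ≃o Pᵒᵈ) :=
  strong_blocker_duality_self_dual_general h
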